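/- Assume in addition that τ(s) > 0 for all s, let θ be an angle function for α, and let v*(s) = −g(s)·sin θ(s)/(f(s)² + g(s)²) (so that s ↦ φ(s, v*(s)) is the striction line of the C-ruled surface). Then for all s: (φ_s × φ_v)(s, v*(s)) = (f(s)·sin θ(s)/(f(s)² + g(s)²))·(−f(s)·N(s) + g(s)·W(s)), and hence the unit normal of the C-ruled surface along the striction line is n(s, v*(s)) = (−f(s)·N(s) + g(s)·W(s))/√(f(s)² + g(s)²). -/

import Mathlib

open RealInnerProductSpace

/-- Cross product on `EuclideanSpace ℝ (Fin 3)`. -/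
noncomputable def cross3 (u v : EuclideanSpace ℝ (Fin 3)) : EuclideanSpace ℝ (Fin 3) :=
  (EuclideanSpace.equiv (Fin 3) ℝ).symm
    (crossProduct ((EuclideanSpace.equiv (Fin 3) ℝ) u) ((EuclideanSpace.equiv (Fin 3) ℝ) v))

/-- Determinant of the 3×3 matrix whose rows are the given vectors. -/
noncomputable def det3 (u v w : EuclideanSpace ℝ (Fin 3)) : ℝ :=
  Matrix.det (Matrix.of ![(EuclideanSpace.equiv (Fin 3) ℝ) u,
    (EuclideanSpace.equiv (Fin 3) ℝ) v, (EuclideanSpace.equiv (Fin 3) ℝ) w])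

/-!
Let `D` be the derivative of the unit director `C`, so that `C ⟂ D`. At the striction point
`v = -⟪α', D⟫ / ‖D‖ ^ 2` the partial derivative `φ_s = α' + v • D` is orthogonal to `D`, hence
`φ_s × C` is a multiple of `D`, namely `(det (α', C, D) / ‖D‖ ^ 2) • D`. For the `C`-ruled surface
the angle function turns the Frenet equations into `D = -f N + g W`; since
`α' = -cos θ C + sin θ W`, this gives `⟪α', D⟫ = g sin θ` and `det (α', C, D) = f sin θ`.
-/

namespace SpaceCurve

local notation "ℝ³" => EuclideanSpace ℝ (Fin 3)

section CrossProduct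

variable (u v w : ℝ³)

lemma cross3_add_left : cross3 (u + v) w = cross3 u w + cross3 v w := by simp [cross3]

lemma cross3_add_right : cross3 u (v + w) = cross3 u v + cross3 u w := by simp [cross3]

lemma cross3_smul_left (c : ℝ) : cross3 (c • u) v = c • cross3 u v := by simp [cross3]

lemma cross3_smul_right (c : ℝ) : cross3 u (c • v) = c • cross3 u v := by simp [cross3]

lemma cross3_zero_right : cross3 u 0 = 0 := by simp [cross3]

lemma cross3_self : cross3 u u = 0 := by simp [cross3]

lemma neg_cross3 : -cross3 u v = cross3 v u := by
  rw [cross3, cross3, ← cross_anticomm, map_neg, neg_neg]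

lemma inner_eq_dotProduct : ⟪u, v⟫ = u.ofLp ⬝ᵥ v.ofLp := by
  simp [EuclideanSpace.inner_eq_star_dotProduct, dotProduct_comm]

lemma ofLp_cross3 : (cross3 u v).ofLp = crossProduct u.ofLp v.ofLp := rfl

lemma inner_self_cross3 : ⟪u, cross3 u v⟫ = 0 := by
  rw [inner_eq_dotProduct, ofLp_cross3, dot_self_cross]

lemma inner_cross3_self : ⟪v, cross3 u v⟫ = 0 := by
  rw [inner_eq_dotProduct, ofLp_cross3, dot_cross_self]

lemma cross3_cross3_left : cross3 (cross3 u v) w = ⟪u, w⟫ • v - ⟪v, w⟫ • u := by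
  apply WithLp.ofLp_injective
  simp [ofLp_cross3, cross_cross_eq_smul_sub_smul, inner_eq_dotProduct]

lemma cross3_cross3_right : cross3 u (cross3 v w) = ⟪u, w⟫ • v - ⟪u, v⟫ • w := by
  rw [← neg_cross3, cross3_cross3_left, neg_sub, real_inner_comm, real_inner_comm u v]

lemma norm_cross3_sq : ‖cross3 u v‖ ^ 2 = ‖u‖ ^ 2 * ‖v‖ ^ 2 - ⟪u, v⟫ ^ 2 := by
  simp_rw [← real_inner_self_eq_norm_sq, inner_eq_dotProduct, ofLp_cross3, cross_dot_cross,
    dotProduct_comm v.ofLp u.ofLp, sq]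

lemma det3_eq_inner_cross3 : det3 u v w = ⟪cross3 u v, w⟫ := by
  rw [real_inner_comm, inner_eq_dotProduct, ofLp_cross3, triple_product_permutation,
    triple_product_eq_det]
  rfl

end CrossProduct

lemma hasDerivAt_cross3 {u v : ℝ → ℝ³} {u' v' : ℝ³} {s : ℝ} (hu : HasDerivAt u u' s)
    (hv : HasDerivAt v v' s) :
    HasDerivAt (fun t => cross3 (u t) (v t)) (cross3 u' (v s) + cross3 (u s) v') s := by
  let crossBilin : ℝ³ →ₗ[ℝ] ℝ³ →ₗ[ℝ] ℝ³ :=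
    LinearMap.mk₂ ℝ cross3 cross3_add_left (fun c u v => cross3_smul_left u v c) cross3_add_right
      fun c u v => cross3_smul_right u v c
  rw [add_comm]
  exact crossBilin.toContinuousBilinearMap.hasDerivAt_of_bilinear (fun _ => hu) fun _ => hv

lemma cross3_eq_smul_of_inner_eq_zero {x c d : ℝ³} (hd : d ≠ 0) (hx : ⟪x, d⟫ = 0)
    (hc : ⟪c, d⟫ = 0) : cross3 x c = (det3 x c d / ‖d‖ ^ 2) • d := by
  have hparallel : cross3 (cross3 x c) d = 0 := by simp [cross3_cross3_left, hx, hc]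
  have hexpand : ‖d‖ ^ 2 • cross3 x c = det3 x c d • d := by
    have h := cross3_cross3_right d (cross3 x c) d
    rw [hparallel, cross3_zero_right, real_inner_self_eq_norm_sq, real_inner_comm,
      ← det3_eq_inner_cross3] at h
    exact sub_eq_zero.1 h.symm
  rw [div_eq_inv_mul, mul_smul, ← hexpand, inv_smul_smul₀ (by simpa using hd)]

/-- Positively oriented orthonormal frames of `ℝ³`, encoded as an orthonormal pair `u, v`
together with `w = u × v`. -/
structure IsPositiveFrame (u v w : ℝ³) : Prop where
  norm_fst : ‖u‖ = 1
  norm_snd : ‖v‖ = 1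
  inner_fst_snd : ⟪u, v⟫ = 0
  cross_fst_snd : cross3 u v = w

namespace IsPositiveFrame

variable {u v w : ℝ³}

lemma rotate (h : IsPositiveFrame u v w) : IsPositiveFrame v w u where
  norm_fst := h.norm_snd
  norm_snd := by
    have hsq := norm_cross3_sq u v
    rw [h.cross_fst_snd, h.norm_fst, h.norm_snd, h.inner_fst_snd] at hsq
    exact (pow_eq_one_iff_of_nonneg (norm_nonneg w) two_ne_zero).1 (by simpa using hsq)
  inner_fst_snd := h.cross_fst_snd ▸ inner_cross3_self u v
  cross_fst_snd := by
    rw [← h.cross_fst_snd, cross3_cross3_right, real_inner_self_eq_norm_sq, h.norm_snd,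
      real_inner_comm, h.inner_fst_snd]
    simp

lemma inner_fst_trd (h : IsPositiveFrame u v w) : ⟪u, w⟫ = 0 := by
  rw [real_inner_comm, h.rotate.rotate.inner_fst_snd]

lemma norm_sq_smul_add_smul_snd_trd (h : IsPositiveFrame u v w) (a b : ℝ) :
    ‖a • v + b • w‖ ^ 2 = a ^ 2 + b ^ 2 := by
  rw [norm_add_sq_real, real_inner_smul_left, real_inner_smul_right, h.rotate.inner_fst_snd,
    norm_smul, norm_smul, h.rotate.norm_fst, h.rotate.norm_snd]
  simp

lemma rotate_plane (h : IsPositiveFrame u v w) {a b : ℝ} (hab : a ^ 2 + b ^ 2 = 1) :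
    IsPositiveFrame u (a • v + b • w) (-b • v + a • w) where
  norm_fst := h.norm_fst
  norm_snd := (pow_eq_one_iff_of_nonneg (norm_nonneg _) two_ne_zero).1 <|
    (h.norm_sq_smul_add_smul_snd_trd a b).trans hab
  inner_fst_snd := by
    rw [inner_add_right, real_inner_smul_right, real_inner_smul_right, h.inner_fst_snd,
      h.inner_fst_trd]
    simp
  cross_fst_snd := by
    rw [cross3_add_right, cross3_smul_right, cross3_smul_right, h.cross_fst_snd,
      ← neg_cross3 w u, h.rotate.rotate.cross_fst_snd, smul_neg, neg_smul, add_comm]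

lemma inner_smul_snd_add_smul_trd (h : IsPositiveFrame u v w) (p q a b : ℝ) :
    ⟪p • v + q • w, a • u + b • w⟫ = q * b := by
  simp only [inner_add_left, inner_add_right, real_inner_smul_left, real_inner_smul_right,
    real_inner_comm u v, real_inner_comm u w, h.inner_fst_snd, h.inner_fst_trd,
    h.rotate.inner_fst_snd, real_inner_self_eq_norm_sq, h.rotate.norm_snd]
  ring

lemma det3_smul_snd_add_smul_trd (h : IsPositiveFrame u v w) (p q a b : ℝ) :
    det3 (p • v + q • w) v (a • u + b • w) = -(q * a) := by
  have hcross : cross3 (p • v + q • w) v = -(q • u) := by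
    rw [cross3_add_left, cross3_smul_left, cross3_smul_left, cross3_self, ← neg_cross3 v w,
      h.rotate.cross_fst_snd, smul_zero, zero_add, smul_neg]
  rw [det3_eq_inner_cross3, hcross, inner_neg_left, real_inner_smul_left, inner_add_right,
    real_inner_smul_right, real_inner_smul_right, real_inner_self_eq_norm_sq, h.norm_fst,
    h.inner_fst_trd]
  ring

end IsPositiveFrame

lemma inner_eq_zero_of_norm_eq_const {E : Type*} [NormedAddCommGroup E] [InnerProductSpace ℝ E]
    {u : ℝ → E} {u' : E} {c s : ℝ} (hc : ∀ t, ‖u t‖ = c) (hu : HasDerivAt u u' s) :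
    ⟪u s, u'⟫ = 0 := by
  have hconst : HasDerivAt (fun t => ‖u t‖ ^ 2) 0 s := by
    simpa only [hc] using hasDerivAt_const s (c ^ 2)
  simpa using hu.norm_sq.unique hconst

section RuledSurface

variable {α c : ℝ → ℝ³} {a d : ℝ³} {s : ℝ}

/-- The ruled surface `φ(s, v) = α(s) + v c(s)` with base curve `α` and director curve `c`. -/
def ruledSurface (α c : ℝ → ℝ³) (s v : ℝ) : ℝ³ := α s + v • c s

/-- The normal vector field `φ_s × φ_v` of a ruled surface, not normalized. -/
noncomputable def ruledSurfaceNormal (α c : ℝ → ℝ³) (s v : ℝ) : ℝ³ :=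
  cross3 (deriv (fun u => ruledSurface α c u v) s) (deriv (fun w => ruledSurface α c s w) v)

lemma ruledSurfaceNormal_eq (hα : HasDerivAt α a s) (hc : HasDerivAt c d s) (v : ℝ) :
    ruledSurfaceNormal α c s v = cross3 (a + v • d) (c s) := by
  have hs : HasDerivAt (fun u => ruledSurface α c u v) (a + v • d) s := hα.add (hc.const_smul v)
  have hv : HasDerivAt (fun w => ruledSurface α c s w) (c s) v := by
    simpa only [one_smul] using! ((hasDerivAt_id v).smul_const (c s)).const_add (α s)
  rw [ruledSurfaceNormal, hs.deriv, hv.deriv]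

lemma ruledSurfaceNormal_striction (hα : HasDerivAt α a s) (hc : HasDerivAt c d s) (hd : d ≠ 0)
    (hcd : ⟪c s, d⟫ = 0) :
    ruledSurfaceNormal α c s (-⟪a, d⟫ / ‖d‖ ^ 2) = (det3 a (c s) d / ‖d‖ ^ 2) • d := by
  set v := -⟪a, d⟫ / ‖d‖ ^ 2
  have horth : ⟪a + v • d, d⟫ = 0 := by
    rw [inner_add_left, real_inner_smul_left, real_inner_self_eq_norm_sq,
      div_mul_cancel₀ _ (by simpa using hd), add_neg_cancel]
  have hdet : det3 (a + v • d) (c s) d = det3 a (c s) d := by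
    rw [det3_eq_inner_cross3, det3_eq_inner_cross3, cross3_add_left, cross3_smul_left,
      inner_add_left, real_inner_smul_left, real_inner_comm d (cross3 d _), inner_self_cross3,
      mul_zero, add_zero]
  rw [ruledSurfaceNormal_eq hα hc, cross3_eq_smul_of_inner_eq_zero hd horth hcd, hdet]

end RuledSurface

section FrenetFrame

/-- The curvature `κ` of a unit-speed curve. -/
noncomputable def curvature (α : ℝ → ℝ³) (s : ℝ) : ℝ := ‖deriv (deriv α) s‖

/-- The principal normal `N` of a unit-speed curve, with value `0` where the curvature vanishes. -/
noncomputable def principalNormal (α : ℝ → ℝ³) (s : ℝ) : ℝ³ :=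
  (curvature α s)⁻¹ • deriv (deriv α) s

/-- The binormal `B = T × N` of a unit-speed curve; the unit tangent `T` is written `deriv α`. -/
noncomputable def binormal (α : ℝ → ℝ³) (s : ℝ) : ℝ³ := cross3 (deriv α s) (principalNormal α s)

/-- The torsion `τ = ⟪N', B⟫` of a unit-speed curve. -/
noncomputable def torsion (α : ℝ → ℝ³) (s : ℝ) : ℝ := ⟪deriv (principalNormal α) s, binormal α s⟫

variable {α : ℝ → ℝ³}

lemma norm_principalNormal {s : ℝ} (hκ : curvature α s ≠ 0) : ‖principalNormal α s‖ = 1 := by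
  rw [principalNormal, norm_smul, norm_inv, curvature, norm_norm]
  exact inv_mul_cancel₀ hκ

lemma hasDerivAt_tangent {s : ℝ} (hκ : curvature α s ≠ 0) :
    HasDerivAt (deriv α) (curvature α s • principalNormal α s) s := by
  have hdiff : DifferentiableAt ℝ (deriv α) s :=
    differentiableAt_of_deriv_ne_zero (norm_ne_zero_iff.1 hκ)
  rw [principalNormal, smul_inv_smul₀ hκ]
  exact hdiff.hasDerivAt

lemma differentiableAt_principalNormal {s : ℝ} (hα : ContDiff ℝ 3 α) (hκ : curvature α s ≠ 0) :
    DifferentiableAt ℝ (principalNormal α) s := by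
  have hα' : ContDiff ℝ 2 (deriv α) := hα.deriv'
  have hα'' : DifferentiableAt ℝ (deriv (deriv α)) s := hα'.differentiable_deriv_two s
  exact ((hα''.norm ℝ (norm_ne_zero_iff.1 hκ)).inv hκ).smul hα''

lemma isPositiveFrame_frenet {s : ℝ} (hunit : ∀ t, ‖deriv α t‖ = 1) (hκ : curvature α s ≠ 0) :
    IsPositiveFrame (deriv α s) (principalNormal α s) (binormal α s) where
  norm_fst := hunit s
  norm_snd := norm_principalNormal hκ
  inner_fst_snd := by
    have h := inner_eq_zero_of_norm_eq_const hunit (hasDerivAt_tangent hκ)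
    rw [real_inner_smul_right] at h
    exact (mul_eq_zero.1 h).resolve_left hκ
  cross_fst_snd := rfl

lemma hasDerivAt_binormal {s : ℝ} (hα : ContDiff ℝ 3 α) (hunit : ∀ t, ‖deriv α t‖ = 1)
    (hκ : ∀ t, curvature α t ≠ 0) :
    HasDerivAt (binormal α) (-torsion α s • principalNormal α s) s := by
  have hN := (differentiableAt_principalNormal hα (hκ s)).hasDerivAt
  have hNN' := inner_eq_zero_of_norm_eq_const (fun t => norm_principalNormal (hκ t)) hN
  have hNB : cross3 (principalNormal α s) (binormal α s) = deriv α s :=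
    (isPositiveFrame_frenet hunit (hκ s)).rotate.cross_fst_snd
  refine (hasDerivAt_cross3 (hasDerivAt_tangent (hκ s)) hN).congr_deriv ?_
  rw [cross3_smul_left, cross3_self, ← hNB, cross3_cross3_left, hNN',
    real_inner_comm, ← torsion]
  simp

end FrenetFrame

section AlternativeFrame

/-- The first alternative curvature `f = √(κ² + τ²)`. -/
noncomputable def alternativeCurvature (α : ℝ → ℝ³) (s : ℝ) : ℝ :=
  Real.sqrt (curvature α s ^ 2 + torsion α s ^ 2)

/-- The second alternative curvature `g = κ² / (κ² + τ²) (τ / κ)'`. -/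
noncomputable def alternativeTorsion (α : ℝ → ℝ³) (s : ℝ) : ℝ :=
  curvature α s ^ 2 / (curvature α s ^ 2 + torsion α s ^ 2) *
    deriv (fun u => torsion α u / curvature α u) s

/-- The vector `C` of the alternative moving frame `N, C, W`. -/
noncomputable def alternativeNormal (α : ℝ → ℝ³) (s : ℝ) : ℝ³ :=
  (alternativeCurvature α s)⁻¹ • ((-curvature α s) • deriv α s + torsion α s • binormal α s)

/-- The vector `W` of the alternative moving frame `N, C, W`, the unit Darboux vector. -/
noncomputable def unitDarboux (α : ℝ → ℝ³) (s : ℝ) : ℝ³ :=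
  (alternativeCurvature α s)⁻¹ • (torsion α s • deriv α s + curvature α s • binormal α s)

/-- The vector `-f N + g W`, which is the derivative of `C` along a curve that has an angle
function. -/
noncomputable def alternativeNormalDeriv (α : ℝ → ℝ³) (s : ℝ) : ℝ³ :=
  (-alternativeCurvature α s) • principalNormal α s + alternativeTorsion α s • unitDarboux α s

/-- Angle functions `θ` of a curve: `κ = f cos θ`, `τ = f sin θ` and `θ' = g`. -/
structure IsAngleFunction (α : ℝ → ℝ³) (θ : ℝ → ℝ) : Prop where
  hasDerivAt : ∀ s, HasDerivAt θ (alternativeTorsion α s) s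
  curvature_eq : ∀ s, curvature α s = alternativeCurvature α s * Real.cos (θ s)
  torsion_eq : ∀ s, torsion α s = alternativeCurvature α s * Real.sin (θ s)

variable {α : ℝ → ℝ³} {θ : ℝ → ℝ} {s : ℝ}

lemma alternativeCurvature_pos (hκ : curvature α s ≠ 0) : 0 < alternativeCurvature α s :=
  Real.sqrt_pos.2 (by positivity)

namespace IsAngleFunction

lemma alternativeNormal_eq (hθ : IsAngleFunction α θ) (hκ : curvature α s ≠ 0) :
    alternativeNormal α s = (-Real.cos (θ s)) • deriv α s + Real.sin (θ s) • binormal α s := by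
  rw [alternativeNormal, hθ.curvature_eq, hθ.torsion_eq, ← mul_neg, mul_smul, mul_smul, ← smul_add,
    inv_smul_smul₀ (alternativeCurvature_pos hκ).ne']

lemma unitDarboux_eq (hθ : IsAngleFunction α θ) (hκ : curvature α s ≠ 0) :
    unitDarboux α s = Real.sin (θ s) • deriv α s + Real.cos (θ s) • binormal α s := by
  rw [unitDarboux, hθ.curvature_eq, hθ.torsion_eq, mul_smul, mul_smul, ← smul_add,
    inv_smul_smul₀ (alternativeCurvature_pos hκ).ne']

lemma tangent_eq (hθ : IsAngleFunction α θ) (hκ : curvature α s ≠ 0) :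
    deriv α s = (-Real.cos (θ s)) • alternativeNormal α s + Real.sin (θ s) • unitDarboux α s := by
  rw [hθ.alternativeNormal_eq hκ, hθ.unitDarboux_eq hκ]
  match_scalars
  · linear_combination -Real.sin_sq_add_cos_sq (θ s)
  · ring

lemma isPositiveFrame (hθ : IsAngleFunction α θ) (hunit : ∀ t, ‖deriv α t‖ = 1)
    (hκ : curvature α s ≠ 0) :
    IsPositiveFrame (principalNormal α s) (alternativeNormal α s) (unitDarboux α s) := by
  have hframe := (isPositiveFrame_frenet hunit hκ).rotate.rotate_plane
    (a := Real.sin (θ s)) (b := -Real.cos (θ s)) (by simp)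
  rwa [neg_neg, add_comm, ← hθ.alternativeNormal_eq hκ, add_comm,
    ← hθ.unitDarboux_eq hκ] at hframe

lemma hasDerivAt_alternativeNormal (hθ : IsAngleFunction α θ) (hα : ContDiff ℝ 3 α)
    (hunit : ∀ t, ‖deriv α t‖ = 1) (hκ : ∀ t, curvature α t ≠ 0) :
    HasDerivAt (alternativeNormal α) (alternativeNormalDeriv α s) s := by
  have hC : alternativeNormal α =
      fun t => (-Real.cos (θ t)) • deriv α t + Real.sin (θ t) • binormal α t :=
    funext fun t => hθ.alternativeNormal_eq (hκ t)
  rw [alternativeNormalDeriv, hθ.unitDarboux_eq (hκ s), hC]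
  have hcos := (hθ.hasDerivAt s).cos.neg.smul (hasDerivAt_tangent (hκ s))
  have hsin := (hθ.hasDerivAt s).sin.smul (hasDerivAt_binormal hα hunit hκ)
  refine (hcos.add hsin).congr_deriv ?_
  rw [hθ.curvature_eq, hθ.torsion_eq, Pi.neg_apply]
  match_scalars
  · linear_combination (-alternativeCurvature α s) * Real.sin_sq_add_cos_sq (θ s)
  all_goals ring

lemma norm_sq_alternativeNormalDeriv (hθ : IsAngleFunction α θ) (hunit : ∀ t, ‖deriv α t‖ = 1)
    (hκ : curvature α s ≠ 0) :
    ‖alternativeNormalDeriv α s‖ ^ 2 =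
      alternativeCurvature α s ^ 2 + alternativeTorsion α s ^ 2 := by
  rw [alternativeNormalDeriv, add_comm,
    (hθ.isPositiveFrame hunit hκ).rotate.norm_sq_smul_add_smul_snd_trd, neg_sq, add_comm]

lemma inner_alternativeNormal_alternativeNormalDeriv (hθ : IsAngleFunction α θ)
    (hunit : ∀ t, ‖deriv α t‖ = 1) (hκ : curvature α s ≠ 0) :
    ⟪alternativeNormal α s, alternativeNormalDeriv α s⟫ = 0 := by
  simpa [alternativeNormalDeriv] using
    (hθ.isPositiveFrame hunit hκ).inner_smul_snd_add_smul_trd 1 0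
      (-alternativeCurvature α s) (alternativeTorsion α s)

lemma inner_tangent_alternativeNormalDeriv (hθ : IsAngleFunction α θ)
    (hunit : ∀ t, ‖deriv α t‖ = 1) (hκ : curvature α s ≠ 0) :
    ⟪deriv α s, alternativeNormalDeriv α s⟫ = alternativeTorsion α s * Real.sin (θ s) := by
  rw [hθ.tangent_eq hκ, alternativeNormalDeriv,
    (hθ.isPositiveFrame hunit hκ).inner_smul_snd_add_smul_trd, mul_comm]

lemma det3_tangent_alternativeNormal_alternativeNormalDeriv (hθ : IsAngleFunction α θ)
    (hunit : ∀ t, ‖deriv α t‖ = 1) (hκ : curvature α s ≠ 0) :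
    det3 (deriv α s) (alternativeNormal α s) (alternativeNormalDeriv α s) = torsion α s := by
  rw [hθ.tangent_eq hκ, alternativeNormalDeriv,
    (hθ.isPositiveFrame hunit hκ).det3_smul_snd_add_smul_trd, mul_neg, neg_neg, mul_comm,
    hθ.torsion_eq]

lemma ruledSurfaceNormal_alternativeNormal_striction (hθ : IsAngleFunction α θ)
    (hα : ContDiff ℝ 3 α) (hunit : ∀ t, ‖deriv α t‖ = 1) (hκ : ∀ t, curvature α t ≠ 0) :
    ruledSurfaceNormal α (alternativeNormal α) s (-(alternativeTorsion α s * Real.sin (θ s)) /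
        (alternativeCurvature α s ^ 2 + alternativeTorsion α s ^ 2)) =
      (torsion α s / (alternativeCurvature α s ^ 2 + alternativeTorsion α s ^ 2)) •
        alternativeNormalDeriv α s := by
  have hnorm := hθ.norm_sq_alternativeNormalDeriv hunit (hκ s)
  have hpos := alternativeCurvature_pos (hκ s)
  have hne : alternativeNormalDeriv α s ≠ 0 := fun h => by
    rw [h, norm_zero] at hnorm
    nlinarith
  have hstriction := ruledSurfaceNormal_striction (hα.differentiable (by norm_num) s).hasDerivAt
    (hθ.hasDerivAt_alternativeNormal hα hunit hκ) hne
    (hθ.inner_alternativeNormal_alternativeNormalDeriv hunit (hκ s))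
  rwa [hθ.inner_tangent_alternativeNormalDeriv hunit (hκ s),
    hθ.det3_tangent_alternativeNormal_alternativeNormalDeriv hunit (hκ s), hnorm] at hstriction

end IsAngleFunction

end AlternativeFrame

end SpaceCurve

open SpaceCurve NormedSpace in
theorem stmt_16_general {α : ℝ → EuclideanSpace ℝ (Fin 3)} {θ : ℝ → ℝ} (hα : ContDiff ℝ 3 α)
    (hunit : ∀ s, ‖deriv α s‖ = 1) (hκ : ∀ s, curvature α s ≠ 0) (hθ : IsAngleFunction α θ)
    (s : ℝ) :
    let f := alternativeCurvature α s
    let g := alternativeTorsion α s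
    let n := ruledSurfaceNormal α (alternativeNormal α) s
      (-(g * Real.sin (θ s)) / (f ^ 2 + g ^ 2))
    let d := (-f) • principalNormal α s + g • unitDarboux α s
    n = (f * Real.sin (θ s) / (f ^ 2 + g ^ 2)) • d ∧
      (torsion α s ≠ 0 →
        normalize n = (SignType.sign (torsion α s) : ℝ) • (Real.sqrt (f ^ 2 + g ^ 2))⁻¹ • d) := by
  intro f g n d
  have hn : n = (torsion α s / (f ^ 2 + g ^ 2)) • d :=
    hθ.ruledSurfaceNormal_alternativeNormal_striction hα hunit hκ
  have hd : ‖d‖ = Real.sqrt (f ^ 2 + g ^ 2) := by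
    rw [← hθ.norm_sq_alternativeNormalDeriv hunit (hκ s), Real.sqrt_sq (norm_nonneg _)]
    rfl
  have hf : 0 < f := alternativeCurvature_pos (hκ s)
  refine ⟨hθ.torsion_eq s ▸ hn, fun _ => ?_⟩
  have hsign : SignType.sign (torsion α s / (f ^ 2 + g ^ 2)) = SignType.sign (torsion α s) := by
    rw [div_eq_mul_inv, sign_mul, sign_pos (by positivity : 0 < (f ^ 2 + g ^ 2)⁻¹), mul_one]
  rw [hn, normalize_smul, hsign, NormedSpace.normalize, hd]

theorem stmt_16
    (α : ℝ → EuclideanSpace ℝ (Fin 3))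
    (hα : ContDiff ℝ (⊤ : ℕ∞) α)
    (hunit : ∀ s, ‖deriv α s‖ = 1)
    (T : ℝ → EuclideanSpace ℝ (Fin 3)) (hT : ∀ s, T s = deriv α s)
    (κ : ℝ → ℝ) (hκ : ∀ s, κ s = ‖deriv (deriv α) s‖) (hκpos : ∀ s, 0 < κ s)
    (N : ℝ → EuclideanSpace ℝ (Fin 3)) (hN : ∀ s, N s = (κ s)⁻¹ • deriv (deriv α) s)
    (B : ℝ → EuclideanSpace ℝ (Fin 3)) (hB : ∀ s, B s = cross3 (T s) (N s))
    (τ : ℝ → ℝ) (hτ : ∀ s, τ s = ⟪deriv N s, B s⟫)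
    (f : ℝ → ℝ) (hf : ∀ s, f s = Real.sqrt (κ s ^ 2 + τ s ^ 2))
    (g : ℝ → ℝ) (hg : ∀ s, g s = κ s ^ 2 / (κ s ^ 2 + τ s ^ 2) * deriv (fun u => τ u / κ u) s)
    (C : ℝ → EuclideanSpace ℝ (Fin 3))
    (hC : ∀ s, C s = (Real.sqrt (κ s ^ 2 + τ s ^ 2))⁻¹ • ((-κ s) • T s + τ s • B s))
    (W : ℝ → EuclideanSpace ℝ (Fin 3))
    (hW : ∀ s, W s = (Real.sqrt (κ s ^ 2 + τ s ^ 2))⁻¹ • (τ s • T s + κ s • B s))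
    (θ : ℝ → ℝ) (hθdiff : Differentiable ℝ θ)
    (hθderiv : ∀ s, deriv θ s = g s)
    (hθκ : ∀ s, κ s = f s * Real.cos (θ s))
    (hθτ : ∀ s, τ s = f s * Real.sin (θ s))
    (φs φv : ℝ → ℝ → EuclideanSpace ℝ (Fin 3))
    (hφs : ∀ s v, φs s v = deriv (fun u => α u + v • C u) s)
    (hφv : ∀ s v, φv s v = deriv (fun w => α s + w • C s) v)
    (hτpos : ∀ s : ℝ, 0 < τ s)
    (vstar : ℝ → ℝ)
    (hvstar : ∀ s : ℝ, vstar s = -(g s * Real.sin (θ s)) / (f s ^ 2 + g s ^ 2)) :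
    ∀ s : ℝ,
      cross3 (φs s (vstar s)) (φv s (vstar s)) =
        (f s * Real.sin (θ s) / (f s ^ 2 + g s ^ 2)) • ((-f s) • N s + g s • W s) ∧
      (‖cross3 (φs s (vstar s)) (φv s (vstar s))‖)⁻¹ • cross3 (φs s (vstar s)) (φv s (vstar s)) =
        (Real.sqrt (f s ^ 2 + g s ^ 2))⁻¹ • ((-f s) • N s + g s • W s) := by
  obtain rfl : T = deriv α := funext hT
  obtain rfl : κ = SpaceCurve.curvature α := funext hκ
  obtain rfl : N = SpaceCurve.principalNormal α := funext hN
  obtain rfl : B = SpaceCurve.binormal α := funext hB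
  obtain rfl : τ = SpaceCurve.torsion α := funext hτ
  obtain rfl : f = SpaceCurve.alternativeCurvature α := funext hf
  obtain rfl : g = SpaceCurve.alternativeTorsion α := funext hg
  obtain rfl : C = SpaceCurve.alternativeNormal α := funext hC
  obtain rfl : W = SpaceCurve.unitDarboux α := funext hW
  have hθ : SpaceCurve.IsAngleFunction α θ :=
    ⟨fun s => hθderiv s ▸ (hθdiff s).hasDerivAt, hθκ, hθτ⟩
  intro s
  have hn : cross3 (φs s (vstar s)) (φv s (vstar s)) =
      SpaceCurve.ruledSurfaceNormal α (SpaceCurve.alternativeNormal α) s (vstar s) := by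
    rw [hφs, hφv]
    rfl
  obtain ⟨hcross, hnormal⟩ :=
    stmt_16_general (hα.of_le (by norm_cast)) hunit (fun s => (hκpos s).ne') hθ s
  rw [← hvstar, ← hn] at hcross hnormal
  refine ⟨hcross, (hnormal (hτpos s).ne').trans ?_⟩
  rw [sign_pos (hτpos s), SignType.coe_one, one_smul]
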